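/- For every forest F, the supremum ρ(F) of τ_F(G)/ν_F(G) over all graphs G with ν_F(G) > 0 satisfies ρ(F) ≥ |V(F)|. -/

import Mathlib

open SimpleGraph Set

/-- `H` is a minor of `G`: there is a model of `H` in `G` given by pairwise disjoint
branch sets, each inducing a connected subgraph, with edges of `H` realized by edges of `G`. -/
def HasMinor {V W : Type*} (G : SimpleGraph V) (H : SimpleGraph W) : Prop :=
  ∃ f : W → Set V,
    (∀ w, ((G.induce (f w)).Connected)) ∧
    (Pairwise fun w w' => Disjoint (f w) (f w')) ∧
    ∀ ⦃w w'⦄, H.Adj w w' → ∃ a ∈ f w, ∃ b ∈ f w', G.Adj a b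

/-- A path decomposition of the part of `G` inside the vertex set `A`, with bags `B 0, …, B (p-1)`. -/
def IsPathDecompOn {V : Type*} (G : SimpleGraph V) (A : Set V) (p : ℕ) (B : Fin p → Set V) : Prop :=
  (∀ i, B i ⊆ A) ∧
  (∀ v ∈ A, ∃ i, v ∈ B i) ∧
  (∀ ⦃u v⦄, G.Adj u v → u ∈ A → v ∈ A → ∃ i, u ∈ B i ∧ v ∈ B i) ∧
  (∀ v (i j l : Fin p), i ≤ j → j ≤ l → v ∈ B i → v ∈ B l → v ∈ B j)

/-- The pathwidth of `G`: the least `t` such that `G` has a path decomposition of width `t`. -/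
noncomputable def pathwidth {V : Type*} (G : SimpleGraph V) : ℕ :=
  sInf {t | ∃ p, ∃ B : Fin p → Set V, IsPathDecompOn G Set.univ p B ∧ ∀ i, (B i).ncard ≤ t + 1}

/-- A packing of `k` vertex-disjoint subgraphs of `G`, each containing `H` as a minor. -/
def IsHPacking {V W : Type*} (G : SimpleGraph V) (H : SimpleGraph W) (k : ℕ)
    (S : Fin k → Set V) : Prop :=
  (Pairwise fun a b => Disjoint (S a) (S b)) ∧ ∀ a, HasMinor (G.induce (S a)) H

/-- `ν_H(G)`: the maximum size of an `H`-packing in `G`. -/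
noncomputable def nuT {V W : Type*} (G : SimpleGraph V) (H : SimpleGraph W) : ℕ :=
  sSup {k | ∃ S : Fin k → Set V, IsHPacking G H k S}

/-- `τ_H(G)`: the minimum size of a vertex set `X` such that `G - X` has no `H`-minor. -/
noncomputable def tauT {V W : Type*} (G : SimpleGraph V) (H : SimpleGraph W) : ℕ :=
  sInf {n | ∃ X : Set V, X.ncard = n ∧ ¬ HasMinor (G.induce Xᶜ) H}

/-- A packing of `k` vertex-disjoint subgraphs of `G`, each containing some member of the
family `F` as a minor. -/
def IsFPacking {V ι : Type*} {W : ι → Type*} (G : SimpleGraph V) (F : ∀ i, SimpleGraph (W i))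
    (k : ℕ) (S : Fin k → Set V) : Prop :=
  (Pairwise fun a b => Disjoint (S a) (S b)) ∧ ∀ a, ∃ i, HasMinor (G.induce (S a)) (F i)

/-- `ν_F(G)`: the maximum size of an `F`-packing in `G`. -/
noncomputable def nuF {V ι : Type*} {W : ι → Type*} (G : SimpleGraph V)
    (F : ∀ i, SimpleGraph (W i)) : ℕ :=
  sSup {k | ∃ S : Fin k → Set V, IsFPacking G F k S}

/-- `τ_F(G)`: the minimum size of a vertex set `X` such that `G - X` has no minor in `F`. -/
noncomputable def tauF {V ι : Type*} {W : ι → Type*} (G : SimpleGraph V)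
    (F : ∀ i, SimpleGraph (W i)) : ℕ :=
  sInf {n | ∃ X : Set V, X.ncard = n ∧ ∀ i, ¬ HasMinor (G.induce Xᶜ) (F i)}


section Aux

variable {V W : Type*}

/-- Boundary of `A` relative to the ambient set `U`. -/
def bd (G : SimpleGraph V) (U A : Set V) : Set V :=
  {a | a ∈ A ∧ ∃ b, b ∈ U ∧ b ∉ A ∧ G.Adj a b}

/-- Sets reachable from the empty set by adding vertices of `U` one at a time while keeping
the boundary of size at most `n`. -/
inductive Good (G : SimpleGraph V) (U : Set V) (n : ℕ) : Set V → Prop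
  | empty : Good G U n ∅
  | step {A : Set V} {v : V} : Good G U n A → v ∈ U → (bd G U (insert v A)).ncard ≤ n →
      Good G U n (insert v A)

/-- `S` contains a model of `F` restricted to `D`. -/
def MinorOn (G : SimpleGraph V) (F : SimpleGraph W) (D : Set W) (S : Set V) : Prop :=
  ∃ f : W → Set V, (∀ w ∈ D, f w ⊆ S) ∧ (∀ w ∈ D, (G.induce (f w)).Connected) ∧
    (∀ w ∈ D, ∀ w' ∈ D, w ≠ w' → Disjoint (f w) (f w')) ∧
    (∀ w ∈ D, ∀ w' ∈ D, F.Adj w w' → ∃ a ∈ f w, ∃ b ∈ f w', G.Adj a b)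

/-- `A` contains a model of `F` restricted to `D` with all branch sets meeting the boundary. -/
def Rooted (G : SimpleGraph V) (U : Set V) (F : SimpleGraph W) (D : Set W) (A : Set V) : Prop :=
  ∃ (f : W → Set V) (r : W → V), (∀ w ∈ D, f w ⊆ A) ∧ (∀ w ∈ D, (G.induce (f w)).Connected) ∧
    (∀ w ∈ D, ∀ w' ∈ D, w ≠ w' → Disjoint (f w) (f w')) ∧
    (∀ w ∈ D, ∀ w' ∈ D, F.Adj w w' → ∃ a ∈ f w, ∃ b ∈ f w', G.Adj a b) ∧
    (∀ w ∈ D, r w ∈ f w ∧ r w ∈ bd G U A)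

theorem Rooted.minorOn {G : SimpleGraph V} {U : Set V} {F : SimpleGraph W} {D : Set W}
    {A : Set V} (h : Rooted G U F D A) : MinorOn G F D A := by
  obtain ⟨f, r, h1, h2, h3, h4, -⟩ := h
  exact ⟨f, h1, h2, h3, h4⟩

theorem MinorOn.mono {G : SimpleGraph V} {F : SimpleGraph W} {D : Set W}
    {A B : Set V} (h : MinorOn G F D A) (hAB : A ⊆ B) : MinorOn G F D B := by
  obtain ⟨f, h1, h2, h3, h4⟩ := h
  exact ⟨f, fun w hw => (h1 w hw).trans hAB, h2, h3, h4⟩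

theorem bd_subset (G : SimpleGraph V) (U A : Set V) : bd G U A ⊆ A := fun _ h => h.1

theorem Good.subset {G : SimpleGraph V} {U : Set V} {n : ℕ} {A : Set V} (h : Good G U n A) :
    A ⊆ U := by
  induction h with
  | empty => exact Set.empty_subset _
  | step _ hv _ ih => exact Set.insert_subset hv ih

theorem Good.bd_le {G : SimpleGraph V} {U : Set V} {n : ℕ} {A : Set V} (h : Good G U n A) :
    (bd G U A).ncard ≤ n := by
  cases h with
  | empty => simp [bd]
  | step _ hv h => exact h

theorem bd_submod [Finite V] (G : SimpleGraph V) (U A C : Set V) :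
    (bd G U (A ∩ C)).ncard + (bd G U (A ∪ C)).ncard ≤ (bd G U A).ncard + (bd G U C).ncard := by
  rw [← Set.ncard_union_add_ncard_inter (bd G U (A ∩ C)),
    ← Set.ncard_union_add_ncard_inter (bd G U A)]
  apply Nat.add_le_add <;> apply Set.ncard_le_ncard _ (Set.toFinite _)
  · rintro x (⟨hx, b, hb, hb', hab⟩ | ⟨hx, b, hb, hb', hab⟩)
    · by_cases hA : b ∈ A
      · right; exact ⟨hx.2, b, hb, fun h => hb' ⟨hA, h⟩, hab⟩
      · left; exact ⟨hx.1, b, hb, hA, hab⟩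
    · rcases hx with hx | hx
      · left; exact ⟨hx, b, hb, fun h => hb' (Or.inl h), hab⟩
      · right; exact ⟨hx, b, hb, fun h => hb' (Or.inr h), hab⟩
  · rintro x ⟨⟨hx, -⟩, ⟨-, b, hb, hb', hab⟩⟩
    exact ⟨⟨hx.1, b, hb, fun h => hb' (Or.inl h), hab⟩, ⟨hx.2, b, hb, fun h => hb' (Or.inr h), hab⟩⟩

theorem Good.inter [Finite V] {G : SimpleGraph V} {U : Set V} {n : ℕ} {A A' C : Set V}
    (h : Good G U n A') (hA : A' ⊆ A) (hCA : C ⊆ A)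
    (hC : ∀ D, C ⊆ D → D ⊆ A → (bd G U C).ncard ≤ (bd G U D).ncard) : Good G U n (A' ∩ C) := by
  induction h with
  | empty => simpa using Good.empty
  | @step A' v h hv hn ih =>
    have ih := ih ((Set.subset_insert _ _).trans hA)
    by_cases hvC : v ∈ C
    · have h1 := bd_submod G U (insert v A') C
      have h2 := hC (insert v A' ∪ C) Set.subset_union_right (Set.union_subset hA hCA)
      have e : insert v A' ∩ C = insert v (A' ∩ C) := by
        rw [Set.insert_inter_of_mem hvC]
      rw [e] at h1 ⊢
      exact Good.step ih hv (by omega)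
    · rwa [Set.insert_inter_of_notMem hvC]

theorem bd_insert_subset (G : SimpleGraph V) (U A : Set V) (y : V) :
    bd G U (insert y A) ⊆ insert y (bd G U A) := by
  rintro x ⟨hx, b, hb, hb', hab⟩
  rcases hx with rfl | hx
  · exact Or.inl rfl
  · exact Or.inr ⟨hx, b, hb, fun h => hb' (Or.inr h), hab⟩

theorem connected_singleton (G : SimpleGraph V) (y : V) :
    (G.induce ({y} : Set V)).Connected := by
  have : Nonempty ({y} : Set V) := ⟨⟨y, rfl⟩⟩
  exact Connected.of_subsingleton

theorem connected_insert {G : SimpleGraph V} {S : Set V} (hS : (G.induce S).Connected) {x y : V}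
    (hx : x ∈ S) (h : G.Adj x y) : (G.induce (insert y S)).Connected := by
  have h2 := induce_union_connected hS.preconnected (induce_pair_connected_of_adj h).preconnected
    ⟨x, hx, Or.inl rfl⟩
  have e : S ∪ {x, y} = insert y S := by
    ext z; simp only [Set.mem_union, Set.mem_insert_iff, Set.mem_singleton_iff]
    constructor
    · rintro (h | rfl | h) <;> tauto
    · tauto
  rw [e] at h2
  exact h2

/-- In a rooted model with tight boundary, every boundary vertex is a root. -/
theorem root_surj [Finite V] {D : Finset W} {f : W → Set V} {r : W → V} {T : Set V}
    (h3 : ∀ w ∈ D, ∀ w' ∈ D, w ≠ w' → Disjoint (f w) (f w'))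
    (h5 : ∀ w ∈ D, r w ∈ f w ∧ r w ∈ T) (hT : T.ncard ≤ D.card) {x : V} (hx : x ∈ T) :
    ∃ w ∈ D, r w = x := by
  have hinj : Set.InjOn r (D : Set W) := by
    intro w hw w' hw' e
    by_contra hne
    exact Set.disjoint_left.1 (h3 w hw w' hw' hne) (h5 w hw).1 (e ▸ (h5 w' hw').1)
  have hsub : r '' (D : Set W) ⊆ T := by
    rintro _ ⟨w, hw, rfl⟩; exact (h5 w hw).2
  have hc : (r '' (D : Set W)).ncard = D.card := by
    rw [hinj.ncard_image, Set.ncard_coe_finset]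
  have := Set.eq_of_subset_of_ncard_le hsub (by omega) (Set.toFinite _)
  rw [← this] at hx
  exact hx

theorem Rooted.insert_one [Finite V] {G : SimpleGraph V} {U : Set V} {F : SimpleGraph W}
    {D : Finset W} {B : Set V} {y : V} (hy : y ∉ B) (h : Rooted G U F D B)
    (hB : (bd G U B).ncard = D.card) (hA : (bd G U (insert y B)).ncard = D.card) :
    Rooted G U F D (insert y B) := by
  classical
  obtain ⟨f, r, h1, h2, h3, h4, h5⟩ := h
  by_cases hyA : y ∈ bd G U (insert y B)
  · have hyB : y ∉ bd G U B := fun h => hy h.1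
    -- the vertex which leaves
    have : ∃ x ∈ bd G U B, x ∉ bd G U (insert y B) := by
      by_contra hcon
      push Not at hcon
      have : insert y (bd G U B) ⊆ bd G U (insert y B) := Set.insert_subset hyA hcon
      have := Set.ncard_le_ncard this (Set.toFinite _)
      rw [Set.ncard_insert_of_notMem hyB (Set.toFinite _)] at this
      omega
    obtain ⟨x, hx, hx'⟩ := this
    have hxy : G.Adj x y := by
      obtain ⟨hxB, b, hb, hb', hab⟩ := hx
      by_cases e : b = y
      · exact e ▸ hab
      · exact absurd ⟨Or.inr hxB, b, hb, fun h => h.elim e hb', hab⟩ hx'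
    have hkeep : ∀ z ∈ bd G U B, z ≠ x → z ∈ bd G U (insert y B) := by
      intro z hz hzx
      by_contra hz'
      have hs : bd G U (insert y B) ⊆ insert y ((bd G U B \ {x}) \ {z}) := by
        intro q hq
        rcases bd_insert_subset G U B y hq with rfl | hq'
        · exact Or.inl rfl
        · refine Or.inr ⟨⟨hq', ?_⟩, ?_⟩
          · rintro rfl; exact hx' hq
          · rintro rfl; exact hz' hq
      have c1 := Set.ncard_le_ncard hs (Set.toFinite _)
      have c2 := Set.ncard_insert_le y ((bd G U B \ {x}) \ {z})
      have c3 := Set.ncard_sdiff_singleton_add_one hx (Set.toFinite _)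
      have c4 := Set.ncard_sdiff_singleton_add_one (s := bd G U B \ {x}) ⟨hz, hzx⟩ (Set.toFinite _)
      omega
    obtain ⟨w0, hw0, rfl⟩ := root_surj h3 h5 hB.le hx
    refine ⟨Function.update f w0 (insert y (f w0)), Function.update r w0 y, ?_, ?_, ?_, ?_, ?_⟩
    · intro w hw
      by_cases e : w = w0
      · subst e; simpa using Set.insert_subset_insert (h1 w hw)
      · simpa [e] using (h1 w hw).trans (Set.subset_insert _ _)
    · intro w hw
      by_cases e : w = w0
      · subst e; rw [Function.update_self]; exact connected_insert (h2 w hw) (h5 w hw).1 hxy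
      · rw [Function.update_of_ne e]; exact h2 w hw
    · intro w hw w' hw' hne
      by_cases e : w = w0
      · subst e
        have e' : w' ≠ w := hne.symm
        simp only [Function.update_self, Function.update_of_ne e']
        rw [Set.disjoint_insert_left]
        exact ⟨fun h => hy (h1 w' hw' h), h3 w hw w' hw' hne⟩
      · by_cases e' : w' = w0
        · subst e'
          simp only [Function.update_self, Function.update_of_ne e]
          rw [Set.disjoint_insert_right]
          exact ⟨fun h => hy (h1 w hw h), h3 w hw w' hw' hne⟩
        · simpa [e, e'] using h3 w hw w' hw' hne
    · intro w hw w' hw' hadj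
      obtain ⟨a, ha, b, hb, hab⟩ := h4 w hw w' hw' hadj
      have hsub : ∀ w, f w ⊆ Function.update f w0 (insert y (f w0)) w := by
        intro w
        by_cases e : w = w0
        · subst e; simp
        · simp [e]
      exact ⟨a, hsub _ ha, b, hsub _ hb, hab⟩
    · intro w hw
      by_cases e : w = w0
      · subst e; simpa using hyA
      · simp only [Function.update_of_ne e]
        refine ⟨(h5 w hw).1, hkeep _ (h5 w hw).2 ?_⟩
        intro e2
        exact Set.disjoint_left.1 (h3 w hw w0 hw0 e) (h5 w hw).1 (e2 ▸ (h5 w0 hw0).1)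
  · have hs : bd G U (insert y B) ⊆ bd G U B := by
      intro q hq
      rcases bd_insert_subset G U B y hq with rfl | hq'
      · exact absurd hq hyA
      · exact hq'
    have e := Set.eq_of_subset_of_ncard_le hs (by omega) (Set.toFinite _)
    refine ⟨f, r, fun w hw => (h1 w hw).trans (Set.subset_insert _ _), h2, h3, h4, ?_⟩
    rw [e]; exact h5

theorem transfer [Finite V] {U : Set V} {F : SimpleGraph W} {D : Finset W} (N : ℕ) :
    ∀ (G : SimpleGraph V) (B A : Set V), (A \ B).ncard + G.edgeSet.ncard ≤ N → B ⊆ A → A ⊆ U →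
      Rooted G U F D B → (bd G U B).ncard = D.card → (bd G U A).ncard = D.card →
      (∀ C, B ⊆ C → C ⊆ A → D.card ≤ (bd G U C).ncard) → Rooted G U F D A := by
  induction N using Nat.strong_induction_on with
  | _ N ih =>
  intro G B A hN hBA hAU hroot hB hA hC
  by_cases hAB : A = B
  · subst hAB; exact hroot
  by_cases hmid : ∃ C, B ⊆ C ∧ C ⊆ A ∧ C ≠ B ∧ C ≠ A ∧ (bd G U C).ncard = D.card
  · obtain ⟨C, hBC, hCA, hCB, hCA', hCc⟩ := hmid
    have l1 : (C \ B).ncard < (A \ B).ncard := by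
      apply Set.ncard_lt_ncard _ (Set.toFinite _)
      refine ⟨Set.sdiff_subset_sdiff_left hCA, fun h => hCA' (hCA.antisymm fun x hx => ?_)⟩
      by_cases hxB : x ∈ B
      · exact hBC hxB
      · exact (h ⟨hx, hxB⟩).1
    have l2 : (A \ C).ncard < (A \ B).ncard := by
      apply Set.ncard_lt_ncard _ (Set.toFinite _)
      refine ⟨Set.sdiff_subset_sdiff_right hBC, fun h => hCB (Set.Subset.antisymm (fun x hx => ?_) hBC)⟩
      by_contra hxB
      exact (h ⟨hCA hx, hxB⟩).2 hx
    have r1 := ih ((C \ B).ncard + G.edgeSet.ncard) (by omega) G B C le_rfl hBC (hCA.trans hAU)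
      hroot hB hCc (fun C' h1 h2 => hC C' h1 (h2.trans hCA))
    exact ih ((A \ C).ncard + G.edgeSet.ncard) (by omega) G C A le_rfl hCA hAU
      r1 hCc hA (fun C' h1 h2 => hC C' (hBC.trans h1) h2)
  push Not at hmid
  by_cases hxy : ∃ x ∈ bd G U B, ∃ y, y ∈ A ∧ y ∉ B ∧ G.Adj x y
  · obtain ⟨x, hx, y, hyA, hyB, hadj⟩ := hxy
    by_cases hyBA : insert y B = A
    · subst hyBA; exact hroot.insert_one hyB hB hA
    have hiA : insert y B ⊆ A := Set.insert_subset hyA hBA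
    have hgt : ∀ C, B ⊆ C → C ⊆ A → C ≠ B → C ≠ A → D.card + 1 ≤ (bd G U C).ncard := by
      intro C h1 h2 h3 h4
      have := hC C h1 h2
      have := hmid C h1 h2 h3 h4
      omega
    have hiB : insert y B ≠ B := fun e => hyB (e ▸ Set.mem_insert y B)
    have hx2 : ∃ b, b ∈ U ∧ b ∉ insert y B ∧ G.Adj x b := by
      by_contra hcon
      have hs : bd G U (insert y B) ⊆ insert y (bd G U B \ {x}) := by
        intro q hq
        rcases bd_insert_subset G U B y hq with rfl | hq'
        · exact Or.inl rfl
        · refine Or.inr ⟨hq', ?_⟩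
          rintro rfl; exact hcon hq.2
      have c0 := hgt _ (Set.subset_insert y B) hiA hiB hyBA
      have c1 := Set.ncard_le_ncard hs (Set.toFinite _)
      have c2 := Set.ncard_insert_le y (bd G U B \ {x})
      have c3 := Set.ncard_sdiff_singleton_add_one hx (Set.toFinite _)
      omega
    obtain ⟨b, hbU, hbi, hxb⟩ := hx2
    set G' := G.deleteEdges {s(x, y)} with hG'
    have hle : G' ≤ G := deleteEdges_le _
    have hadj' : ∀ u v, G'.Adj u v ↔ G.Adj u v ∧ ¬ ((u = x ∧ v = y) ∨ (u = y ∧ v = x)) := by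
      intro u v
      simp [hG', deleteEdges_adj]
    have hby : b ≠ y := fun e => hbi (Or.inl e)
    have hxB : x ∈ B := hx.1
    have hxny : x ≠ y := hadj.ne
    -- boundaries
    have hsub' : ∀ C, bd G' U C ⊆ bd G U C := by
      rintro C q ⟨hq, c, hc, hc', hqc⟩
      exact ⟨hq, c, hc, hc', hle hqc⟩
    have hsub : ∀ C, B ⊆ C → ∀ q ∈ bd G U C, q ≠ x → q ∈ bd G' U C := by
      rintro C hBC q ⟨hq, c, hc, hc', hqc⟩ hqx
      refine ⟨hq, c, hc, hc', (hadj' _ _).2 ⟨hqc, ?_⟩⟩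
      rintro (⟨rfl, -⟩ | ⟨-, rfl⟩)
      · exact hqx rfl
      · exact hc' (hBC hxB)
    have eB : bd G' U B = bd G U B := by
      apply (hsub' B).antisymm
      intro q hq
      by_cases hqx : q = x
      · subst hqx
        refine ⟨hxB, b, hbU, fun h => hbi (Or.inr h), (hadj' _ _).2 ⟨hxb, ?_⟩⟩
        rintro (⟨-, h⟩ | ⟨h, -⟩)
        · exact hby h
        · exact hxny h
      · exact hsub B subset_rfl q hq hqx
    have eA : bd G' U A = bd G U A := by
      apply (hsub' A).antisymm
      rintro q ⟨hq, c, hc, hc', hqc⟩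
      refine ⟨hq, c, hc, hc', (hadj' _ _).2 ⟨hqc, ?_⟩⟩
      rintro (⟨-, rfl⟩ | ⟨-, rfl⟩)
      · exact hc' hyA
      · exact hc' (hBA hxB)
    have hE : G'.edgeSet.ncard < G.edgeSet.ncard := by
      apply Set.ncard_lt_ncard _ (Set.toFinite _)
      refine ⟨edgeSet_subset_edgeSet.2 hle, fun h => ?_⟩
      have : s(x, y) ∈ G'.edgeSet := h hadj
      rw [mem_edgeSet, hadj'] at this
      exact this.2 (Or.inl ⟨rfl, rfl⟩)
    have hroot' : Rooted G' U F D B := by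
      obtain ⟨f, r, h1, h2, h3, h4, h5⟩ := hroot
      have hin : ∀ u v, u ∈ B → v ∈ B → G.Adj u v → G'.Adj u v := by
        intro u v hu hv huv
        refine (hadj' _ _).2 ⟨huv, ?_⟩
        rintro (⟨-, rfl⟩ | ⟨rfl, -⟩)
        · exact hyB hv
        · exact hyB hu
      refine ⟨f, r, h1, ?_, h3, ?_, ?_⟩
      · intro w hw
        refine (h2 w hw).mono ?_
        intro u v huv
        exact hin _ _ (h1 w hw u.2) (h1 w hw v.2) huv
      · intro w hw w' hw' hww
        obtain ⟨a, ha, c, hc, hac⟩ := h4 w hw w' hw' hww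
        exact ⟨a, ha, c, hc, hin _ _ (h1 w hw ha) (h1 w' hw' hc) hac⟩
      · rw [eB]; exact h5
    have hres : Rooted G' U F D A := by
      refine ih ((A \ B).ncard + G'.edgeSet.ncard) (by omega) G' B A le_rfl hBA hAU hroot'
        (by rw [eB, hB]) (by rw [eA, hA]) ?_
      intro C h1 h2
      by_cases hCB : C = B
      · subst hCB; rw [eB, hB]
      by_cases hCA : C = A
      · subst hCA; rw [eA, hA]
      have c0 := hgt C h1 h2 hCB hCA
      have hs : bd G U C ⊆ insert x (bd G' U C) := by
        intro q hq
        by_cases hqx : q = x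
        · exact Or.inl hqx
        · exact Or.inr (hsub C h1 q hq hqx)
      have c1 := Set.ncard_le_ncard hs (Set.toFinite _)
      have c2 := Set.ncard_insert_le x (bd G' U C)
      omega
    obtain ⟨f, r, h1, h2, h3, h4, h5⟩ := hres
    refine ⟨f, r, h1, ?_, h3, ?_, ?_⟩
    · intro w hw
      refine (h2 w hw).mono ?_
      intro u v huv
      exact hle huv
    · intro w hw w' hw' hww
      obtain ⟨a, ha, c, hc, hac⟩ := h4 w hw w' hw' hww
      exact ⟨a, ha, c, hc, hle hac⟩
    · rw [← eA]; exact h5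
  · push Not at hxy
    have hs : bd G U B ⊆ bd G U A := by
      intro q hq
      obtain ⟨hqB, c, hc, hc', hqc⟩ := id hq
      exact ⟨hBA hqB, c, hc, fun h => hxy q hq c h hc' hqc, hqc⟩
    have e := Set.eq_of_subset_of_ncard_le hs (by omega) (Set.toFinite _)
    obtain ⟨f, r, h1, h2, h3, h4, h5⟩ := hroot
    exact ⟨f, r, fun w hw => (h1 w hw).trans hBA, h2, h3, h4, by rw [← e]; exact h5⟩

theorem exists_leaf [Finite W] {F : SimpleGraph W} (hF : F.IsAcyclic) {s : Finset W}
    (hs : s.Nonempty) :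
    ∃ w ∈ s, ∀ u ∈ s, ∀ v ∈ s, F.Adj w u → F.Adj w v → u = v := by
  classical
  have : Nonempty (s : Set W) := ⟨⟨hs.choose, hs.choose_spec⟩⟩
  obtain ⟨T, hT1, hT, hT2⟩ := (connected_top (V := (s : Set W))).exists_isTree_le_of_le_of_isAcyclic
    le_top (hF.induce (s : Set W))
  rcases subsingleton_or_nontrivial (s : Set W) with hsub | hnt
  · refine ⟨hs.choose, hs.choose_spec, fun u hu v hv _ _ => ?_⟩
    exact congrArg Subtype.val (hsub.elim ⟨u, hu⟩ ⟨v, hv⟩)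
  · obtain ⟨w, hw⟩ := hT2.exists_vert_degree_one_of_nontrivial
    rw [degree_eq_one_iff_existsUnique_adj] at hw
    refine ⟨w, w.2, fun u hu v hv h1 h2 => ?_⟩
    have e := hw.unique (y₁ := ⟨u, hu⟩) (y₂ := ⟨v, hv⟩) (hT1 h1) (hT1 h2)
    exact congrArg Subtype.val e

theorem exists_max_good [Finite V] {G : SimpleGraph V} {U : Set V} {n : ℕ} {B : Set V} {m : ℕ}
    (hB : Good G U n B) (hm : (bd G U B).ncard ≤ m) :
    ∃ A, B ⊆ A ∧ Good G U n A ∧ (bd G U A).ncard ≤ m ∧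
      ∀ A', A ⊆ A' → Good G U n A' → (bd G U A').ncard ≤ m → A' = A := by
  obtain ⟨A, hBA, hA⟩ := (Set.toFinite {A | Good G U n A ∧ (bd G U A).ncard ≤ m}).exists_le_maximal
    (a := B) ⟨hB, hm⟩
  refine ⟨A, hBA, hA.prop.1, hA.prop.2, fun A' h1 h2 h3 => ?_⟩
  exact (hA.le_of_ge (y := A') ⟨h2, h3⟩ h1).antisymm h1

theorem core [Finite V] [Finite W] {G : SimpleGraph V} {U : Set V} {n : ℕ} {F : SimpleGraph W}
    (hF : F.IsAcyclic) (hU : ¬ Good G U n U) (N : ℕ) : ∀ s : Finset W, s.card = N → N ≤ n →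
    ∃ A, Good G U n A ∧ (bd G U A).ncard = s.card ∧ Rooted G U F s A ∧
      ∀ A', A ⊆ A' → Good G U n A' → (bd G U A').ncard ≤ s.card → A' = A := by
  classical
  induction N with
  | zero =>
    intro s hs _
    have : s = ∅ := by simpa using hs
    subst this
    obtain ⟨A, -, h1, h2, h3⟩ := exists_max_good (B := ∅) (m := 0) (Good.empty (G := G) (U := U) (n := n))
      (by simp [bd])
    refine ⟨A, h1, by simpa using h2, ?_, by simpa using h3⟩
    rcases isEmpty_or_nonempty V with hV | ⟨⟨v⟩⟩
    · exact absurd (by rw [Set.eq_empty_of_isEmpty U]; exact Good.empty) hU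
    · exact ⟨fun _ => ∅, fun _ => v, by simp, by simp, by simp, by simp, by simp⟩
  | succ N ih =>
    intro s hs hNn
    obtain ⟨w, hw, hleaf⟩ := exists_leaf hF (s := s) (Finset.card_pos.1 (by omega))
    have hc : (s.erase w).card = N := by rw [Finset.card_erase_of_mem hw]; omega
    obtain ⟨A, hA, hbA, ⟨f, r, h1, h2, h3, h4, h5⟩, hmax⟩ := ih (s.erase w) hc (by omega)
    rw [hc] at hbA hmax
    have hAU : A ≠ U := fun e => hU (e ▸ hA)
    -- the new vertex
    have hy : ∃ y, y ∈ U ∧ y ∉ A ∧ ∀ u ∈ s.erase w, F.Adj w u → ∃ a ∈ f u, G.Adj a y := by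
      by_cases hu : ∃ u ∈ s.erase w, F.Adj w u
      · obtain ⟨u, hu, hwu⟩ := hu
        obtain ⟨hr, hrA, y, hyU, hyA, hadj⟩ := h5 u hu
        refine ⟨y, hyU, hyA, fun u' hu' hwu' => ?_⟩
        have : u' = u := hleaf u' (Finset.mem_of_mem_erase hu') u (Finset.mem_of_mem_erase hu) hwu' hwu
        subst this
        exact ⟨_, hr, hadj⟩
      · push Not at hu
        have : ∃ y, y ∈ U ∧ y ∉ A := by
          by_contra hcon
          push Not at hcon
          exact hAU (hA.subset.antisymm hcon)
        obtain ⟨y, hyU, hyA⟩ := this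
        exact ⟨y, hyU, hyA, fun u hu1 hu2 => absurd hu2 (hu u hu1)⟩
    obtain ⟨y, hyU, hyA, hyadj⟩ := hy
    have hne : insert y A ≠ A := fun e => hyA (e ▸ Set.mem_insert y A)
    have hyb : y ∉ bd G U A := fun h => hyA h.1
    have c1 := Set.ncard_le_ncard (bd_insert_subset G U A y) (Set.toFinite _)
    rw [Set.ncard_insert_of_notMem hyb (Set.toFinite _)] at c1
    have hB : Good G U n (insert y A) := Good.step hA hyU (by omega)
    have c2 : N + 1 ≤ (bd G U (insert y A)).ncard := by
      by_contra hcon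
      exact hne (hmax _ (Set.subset_insert _ _) hB (by omega))
    have eB : bd G U (insert y A) = insert y (bd G U A) := by
      apply Set.eq_of_subset_of_ncard_le (bd_insert_subset G U A y) _ (Set.toFinite _)
      rw [Set.ncard_insert_of_notMem hyb (Set.toFinite _)]; omega
    have hsub : ∀ A', insert y A ⊆ A' → A ⊆ A' := fun A' h => (Set.subset_insert _ _).trans h
    have hbig : ∀ A', insert y A ⊆ A' → Good G U n A' → N + 1 ≤ (bd G U A').ncard := by
      intro A' h hg
      by_contra hcon
      have := hmax A' (hsub A' h) hg (by omega)
      subst this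
      exact hyA (h (Set.mem_insert _ _))
    have hrB : Rooted G U F s (insert y A) := by
      have hmem : ∀ u ∈ s, u ≠ w → u ∈ s.erase w := fun u hu hne => Finset.mem_erase.2 ⟨hne, hu⟩
      refine ⟨Function.update f w {y}, Function.update r w y, ?_, ?_, ?_, ?_, ?_⟩
      · intro u hu
        by_cases e : u = w
        · subst e; simp
        · rw [Function.update_of_ne e]
          exact (h1 u (hmem u hu e)).trans (Set.subset_insert _ _)
      · intro u hu
        by_cases e : u = w
        · subst e; rw [Function.update_self]; exact connected_singleton G y
        · rw [Function.update_of_ne e]; exact h2 u (hmem u hu e)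
      · intro u hu u' hu' hne
        by_cases e : u = w
        · subst e
          rw [Function.update_self, Function.update_of_ne hne.symm, Set.disjoint_singleton_left]
          exact fun h => hyA (h1 u' (hmem u' hu' hne.symm) h)
        · by_cases e' : u' = w
          · subst e'
            rw [Function.update_self, Function.update_of_ne hne, Set.disjoint_singleton_right]
            exact fun h => hyA (h1 u (hmem u hu hne) h)
          · rw [Function.update_of_ne e, Function.update_of_ne e']
            exact h3 u (hmem u hu e) u' (hmem u' hu' e') hne
      · intro u hu u' hu' hadj
        by_cases e : u = w
        · subst e
          have e' : u' ≠ u := hadj.ne'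
          rw [Function.update_self, Function.update_of_ne e']
          obtain ⟨a, ha, hay⟩ := hyadj u' (hmem u' hu' e') hadj
          exact ⟨y, rfl, a, ha, hay.symm⟩
        · by_cases e' : u' = w
          · subst e'
            rw [Function.update_self, Function.update_of_ne e]
            obtain ⟨a, ha, hay⟩ := hyadj u (hmem u hu e) hadj.symm
            exact ⟨a, ha, y, rfl, hay⟩
          · rw [Function.update_of_ne e, Function.update_of_ne e']
            exact h4 u (hmem u hu e) u' (hmem u' hu' e') hadj
      · intro u hu
        rw [eB]
        by_cases e : u = w
        · subst e; simp
        · rw [Function.update_of_ne e, Function.update_of_ne e]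
          exact ⟨(h5 u (hmem u hu e)).1, Or.inr (h5 u (hmem u hu e)).2⟩
    obtain ⟨A', hBA', hgA', hbA', hmax'⟩ := exists_max_good (m := N + 1) hB (by omega)
    refine ⟨A', hgA', ?_, ?_, by rw [hs]; exact hmax'⟩
    · have := hbig A' hBA' hgA'; omega
    · refine transfer _ G (insert y A) A' le_rfl hBA' hgA'.subset hrB (by omega)
        (by have := hbig A' hBA' hgA'; omega) ?_
      -- minimality
      obtain ⟨C, ⟨hC1, hC2⟩, hC3⟩ := Set.exists_min_image {C | insert y A ⊆ C ∧ C ⊆ A'}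
        (fun C => (bd G U C).ncard) (Set.toFinite _) ⟨A', hBA', subset_rfl⟩
      have hgC : Good G U n C := by
        have := hgA'.inter subset_rfl hC2
          (fun D h1 h2 => hC3 D ⟨hC1.trans h1, h2⟩)
        rwa [Set.inter_eq_self_of_subset_right hC2] at this
      intro D h1 h2
      have q1 := hbig C hC1 hgC
      have q2 := hC3 D ⟨h1, h2⟩
      omega

theorem exists_piece [Finite V] [Fintype W] {G : SimpleGraph V} {U : Set V} {F : SimpleGraph W}
    (hF : F.IsAcyclic) (hU : ¬ Good G U (Fintype.card W) U) :
    ∃ A, Good G U (Fintype.card W) A ∧ MinorOn G F Set.univ A := by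
  obtain ⟨A, h1, -, h3, -⟩ := core (F := F) hF hU _ Finset.univ rfl (by simp)
  refine ⟨A, h1, ?_⟩
  simpa using h3.minorOn

theorem Good.diff [Finite V] {G : SimpleGraph V} {U : Set V} {n : ℕ} {A : Set V} (Y : Set V)
    (h : Good G U n A) : Good G (U \ Y) n (A \ Y) := by
  induction h with
  | empty => simpa using Good.empty
  | @step A v h hv hn ih =>
    by_cases hY : v ∈ Y
    · rwa [Set.insert_sdiff_of_mem _ hY]
    · rw [Set.insert_sdiff_of_notMem _ hY]
      refine Good.step ih ⟨hv, hY⟩ (le_trans (Set.ncard_le_ncard ?_ (Set.toFinite _)) hn)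
      rw [← Set.insert_sdiff_of_notMem _ hY]
      rintro x ⟨hx, b, hb, hb', hab⟩
      exact ⟨hx.1, b, hb.1, fun h => hb' ⟨h, hb.2⟩, hab⟩

theorem Good.concat [Finite V] {G : SimpleGraph V} {n : ℕ} {A D C : Set V}
    (hA : Good G (A ∪ D) n A) (hno : ∀ a ∈ A, ∀ b ∈ D, ¬ G.Adj a b) (h : Good G D n C) :
    Good G (A ∪ D) n (A ∪ C) := by
  induction h with
  | empty => simpa using hA
  | @step C v h hv hn ih =>
    rw [Set.union_insert]
    refine Good.step ih (Or.inr hv) (le_trans (Set.ncard_le_ncard ?_ (Set.toFinite _)) hn)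
    rw [← Set.union_insert]
    rintro x ⟨hx, b, hb, hb', hab⟩
    have hbD : b ∈ D := hb.resolve_left fun h => hb' (Or.inl h)
    rcases hx with hx | hx
    · exact absurd hab (hno x hx b hbD)
    · exact ⟨hx, b, hbD, fun h => hb' (Or.inr h), hab⟩

theorem stage_one [Finite V] [Fintype W] [Nonempty W] {G : SimpleGraph V} {F : SimpleGraph W}
    (hF : F.IsAcyclic) (N : ℕ) : ∀ U : Set V, U.ncard = N →
    ∃ (k : ℕ) (S : Fin k → Set V) (X : Set V), (∀ a, S a ⊆ U) ∧
      (Pairwise fun a b => Disjoint (S a) (S b)) ∧ (∀ a, MinorOn G F Set.univ (S a)) ∧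
      X.ncard ≤ Fintype.card W * k ∧ Good G (U \ X) (Fintype.card W) (U \ X) := by
  induction N using Nat.strong_induction_on with
  | _ N ih =>
  intro U hN
  by_cases hU : Good G U (Fintype.card W) U
  · exact ⟨0, fun _ => ∅, ∅, fun a => a.elim0, fun a => a.elim0, fun a => a.elim0, by simp,
      by simpa using hU⟩
  obtain ⟨A, hA, hm⟩ := exists_piece hF hU
  have hne : A.Nonempty := by
    obtain ⟨f, h1, h2, -⟩ := hm
    obtain ⟨w⟩ := ‹Nonempty W›
    obtain ⟨x⟩ := (h2 w trivial).nonempty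
    exact ⟨x, h1 w trivial x.2⟩
  have hlt : (U \ A).ncard < N := by
    rw [← hN]
    apply Set.ncard_lt_ncard _ (Set.toFinite _)
    obtain ⟨a, ha⟩ := hne
    exact ⟨Set.sdiff_subset, fun h => (h (hA.subset ha)).2 ha⟩
  obtain ⟨k, S, X, h1, h2, h3, h4, h5⟩ := ih _ hlt (U \ A) rfl
  have hX : ∃ X', X' ⊆ U \ A ∧ X'.ncard ≤ Fintype.card W * k ∧ (U \ A) \ X' = (U \ A) \ X := by
    refine ⟨X ∩ (U \ A), Set.inter_subset_right,
      (Set.ncard_le_ncard Set.inter_subset_left (Set.toFinite _)).trans h4, ?_⟩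
    ext x; simp only [Set.mem_sdiff, Set.mem_inter_iff]; tauto
  obtain ⟨X', hX1, hX2, hX3⟩ := hX
  rw [← hX3] at h5
  refine ⟨k + 1, Fin.cons A S, bd G U A ∪ X', ?_, ?_, ?_, ?_, ?_⟩
  · intro a
    refine Fin.cases ?_ (fun a => ?_) a
    · exact hA.subset
    · exact (h1 a).trans Set.sdiff_subset
  · have hd : ∀ a, Disjoint A (S a) := fun a =>
      Set.disjoint_left.2 fun x hx hx' => (h1 a hx').2 hx
    intro a b
    refine Fin.cases ?_ (fun a => ?_) a <;> refine Fin.cases ?_ (fun b => ?_) b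
    · intro h; exact absurd rfl h
    · intro _; exact hd b
    · intro _; exact (hd a).symm
    · intro h; exact h2 fun e => h (congrArg Fin.succ e)
  · intro a
    refine Fin.cases ?_ (fun a => ?_) a
    · exact hm
    · exact h3 a
  · have := Set.ncard_union_le (bd G U A) X'
    have := hA.bd_le
    rw [Nat.mul_succ]; omega
  · have e : U \ (bd G U A ∪ X') = (A \ bd G U A) ∪ ((U \ A) \ X') := by
      ext x
      have := @bd_subset _ G U A x
      have : x ∈ A → x ∈ U := fun h => hA.subset h
      have := @hX1 x
      simp only [Set.mem_sdiff, Set.mem_union] at *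
      tauto
    have e2 : A \ (bd G U A ∪ X') = A \ bd G U A := by
      ext x
      have := @hX1 x
      simp only [Set.mem_sdiff, Set.mem_union] at *
      tauto
    rw [e]
    refine Good.concat ?_ ?_ h5
    · rw [← e, ← e2]
      exact hA.diff _
    · rintro a ⟨ha, ha'⟩ b ⟨⟨hb, hb'⟩, -⟩ hab
      exact ha' ⟨ha, b, hb, hb', hab⟩

theorem first_prefix {G : SimpleGraph V} {U : Set V} {n : ℕ} {A : Set V} {P : Set V → Prop}
    (h : Good G U n A) (h0 : ¬ P ∅) (hA : P A) :
    ∃ A' v, ¬ P A' ∧ P (insert v A') ∧ Good G U n (insert v A') := by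
  induction h with
  | empty => exact absurd hA h0
  | @step A v h hv hn ih =>
    by_cases hP : P A
    · exact ih hP
    · exact ⟨A, v, hP, hA, Good.step h hv hn⟩

theorem conn_side {G : SimpleGraph V} {f P Q : Set V} (hf : (G.induce f).Connected)
    (hPQ : f ⊆ P ∪ Q) (hno : ∀ a ∈ P, ∀ b ∈ Q, ¬ G.Adj a b) {x : V} (hx : x ∈ f) (hxP : x ∈ P) :
    f ⊆ P := by
  have key : ∀ u v : f, (G.induce f).Walk u v → (u : V) ∈ P → (v : V) ∈ P := by
    intro u v p
    induction p with
    | nil => exact id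
    | @cons u v w h p ih =>
      intro hu
      refine ih ((hPQ v.2).resolve_right fun hv => hno _ hu _ hv h)
  intro y hy
  obtain ⟨p⟩ := hf.preconnected ⟨x, hx⟩ ⟨y, hy⟩
  exact key _ _ p hxP

theorem minor_side {G : SimpleGraph V} {F : SimpleGraph W} {c : F.ConnectedComponent}
    {P Q : Set V} (hno : ∀ a ∈ P, ∀ b ∈ Q, ¬ G.Adj a b)
    (h : MinorOn G F c.supp (P ∪ Q)) : MinorOn G F c.supp P ∨ MinorOn G F c.supp Q := by
  obtain ⟨f, h1, h2, h3, h4⟩ := h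
  have key : ∀ (P Q : Set V), (∀ a ∈ P, ∀ b ∈ Q, ¬ G.Adj a b) → (∀ w ∈ c.supp, f w ⊆ P ∪ Q) →
      ∀ w ∈ c.supp, ∀ x ∈ f w, x ∈ P → MinorOn G F c.supp P := by
    intro P Q hno h1 w hw x hx hxP
    have hw0 : f w ⊆ P := conn_side (h2 w hw) (h1 w hw) hno hx hxP
    have step : ∀ u v, F.Walk u v → u ∈ c.supp → f u ⊆ P → f v ⊆ P := by
      intro u v p
      induction p with
      | nil => exact fun _ h => h
      | @cons u v w h p ih =>
        intro hu hfu
        have hv : v ∈ c.supp := (c.mem_supp_congr_adj h).1 hu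
        refine ih hv ?_
        obtain ⟨a, ha, b, hb, hab⟩ := h4 u hu v hv h
        exact conn_side (h2 v hv) (h1 v hv) hno hb
          ((h1 v hv hb).resolve_right fun hq => hno a (hfu ha) b hq hab)
    refine ⟨f, fun v hv => ?_, h2, h3, h4⟩
    have : F.Reachable w v := by
      rw [ConnectedComponent.mem_supp_iff] at hw hv
      exact ConnectedComponent.exact (hw.trans hv.symm)
    obtain ⟨p⟩ := this
    exact step w v p hw hw0
  obtain ⟨w, hw⟩ := c.nonempty_supp
  obtain ⟨x⟩ := (h2 w hw).nonempty
  rcases h1 w hw x.2 with hx | hx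
  · exact Or.inl (key P Q hno h1 w hw x x.2 hx)
  · exact Or.inr (key Q P (fun a ha b hb h => hno b hb a ha h.symm)
      (fun w hw => by rw [Set.union_comm]; exact h1 w hw) w hw x x.2 hx)

theorem stage_two [Finite V] {G : SimpleGraph V} {F : SimpleGraph W}
    [Fintype F.ConnectedComponent] {n : ℕ} (N : ℕ) :
    ∀ (k : F.ConnectedComponent → ℕ) (U : Set V), ∑ c, k c = N → Good G U n U →
    (∃ S : F.ConnectedComponent → ℕ → Set V,
      (∀ c a, a < k c → S c a ⊆ U ∧ MinorOn G F c.supp (S c a)) ∧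
      ∀ c a c' a', a < k c → a' < k c' → (c ≠ c' ∨ a ≠ a') → Disjoint (S c a) (S c' a')) ∨
    (∃ c X, 0 < k c ∧ X.ncard ≤ (n + 1) * N ∧ ¬ MinorOn G F c.supp (U \ X)) := by
  classical
  induction N with
  | zero =>
    intro k U hk hU
    have hk0 : ∀ c, k c = 0 := by simpa using hk
    left
    exact ⟨fun _ _ => ∅, fun c a h => absurd h (by simp [hk0]),
      fun c a c' a' h => absurd h (by simp [hk0])⟩
  | succ N ih =>
    intro k U hk hU
    have hex : ∃ c, 0 < k c := by
      by_contra hcon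
      push Not at hcon
      have : ∑ c, k c = 0 := Finset.sum_eq_zero fun c _ => by simpa using hcon c
      omega
    by_cases hP : ∃ c, 0 < k c ∧ MinorOn G F c.supp U
    swap
    · push Not at hP
      obtain ⟨c, hc⟩ := hex
      right
      exact ⟨c, ∅, hc, by simp, by simpa using hP c hc⟩
    have h0 : ¬ ∃ c, 0 < k c ∧ MinorOn G F c.supp (∅ : Set V) := by
      rintro ⟨c, -, f, h1, h2, -⟩
      obtain ⟨w, hw⟩ := c.nonempty_supp
      obtain ⟨x⟩ := (h2 w hw).nonempty
      exact h1 w hw x.2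
    obtain ⟨A', v, hA', ⟨c, hc, hcm⟩, hgood⟩ :=
      first_prefix (P := fun A => ∃ c, 0 < k c ∧ MinorOn G F c.supp A) hU h0 hP
    push Not at hA'
    set A := insert v A' with hAdef
    set k' := Function.update k c (k c - 1) with hk'
    have hk'c : k' c = k c - 1 := by simp [hk']
    have hk'n : ∀ d, d ≠ c → k' d = k d := fun d hd => by simp [hk', hd]
    have hsum : ∑ d, k' d = N := by
      have e1 := Finset.sum_update_of_mem (Finset.mem_univ c) k (k c - 1)
      have e2 := Finset.add_sum_erase Finset.univ k (Finset.mem_univ c)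
      rw [Finset.sdiff_singleton_eq_erase] at e1
      rw [hk', e1]; omega
    have hle : ∀ d, k' d ≤ k d := by
      intro d
      by_cases e : d = c
      · subst e; omega
      · exact (hk'n d e).le
    rcases ih k' (U \ A) hsum (hU.diff A) with ⟨S, hS1, hS2⟩ | ⟨d, X, hd, hX, hm⟩
    · left
      have hold : ∀ d a, a < k d → ¬ (d = c ∧ a = k c - 1) → a < k' d := by
        intro d a h1 h2
        by_cases e : d = c
        · subst e
          have : a ≠ k d - 1 := fun h => h2 ⟨rfl, h⟩
          omega
        · rw [hk'n d e]; exact h1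
      refine ⟨fun d a => if d = c ∧ a = k c - 1 then A else S d a, ?_, ?_⟩
      · intro d a ha
        by_cases e : d = c ∧ a = k c - 1
        · simp only [e, and_self, if_true]
          exact ⟨hgood.subset, hcm⟩
        · simp only [e, if_false]
          have := hS1 d a (hold d a ha e)
          exact ⟨this.1.trans Set.sdiff_subset, this.2⟩
      · have hdis : ∀ d a, a < k d → ¬ (d = c ∧ a = k c - 1) → Disjoint A (S d a) := by
          intro d a ha e
          exact Set.disjoint_left.2 fun x hx hx' => ((hS1 d a (hold d a ha e)).1 hx').2 hx
        intro d a d' a' ha ha' hne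
        by_cases e : d = c ∧ a = k c - 1 <;> by_cases e' : d' = c ∧ a' = k c - 1
        · exfalso
          rcases hne with h | h
          · exact h (e.1.trans e'.1.symm)
          · exact h (e.2.trans e'.2.symm)
        · simp only [if_pos e, if_neg e']; exact hdis d' a' ha' e'
        · simp only [if_neg e, if_pos e']; exact (hdis d a ha e).symm
        · simp only [if_neg e, if_neg e']
          exact hS2 d a d' a' (hold d a ha e) (hold d' a' ha' e') hne
    · right
      refine ⟨d, insert v (bd G U A) ∪ X, lt_of_lt_of_le hd (hle d), ?_, ?_⟩
      · have c1 := Set.ncard_union_le (insert v (bd G U A)) X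
        have c2 := Set.ncard_insert_le v (bd G U A)
        have c3 := hgood.bd_le
        rw [Nat.mul_succ]; omega
      · intro hcon
        have hsub : U \ (insert v (bd G U A) ∪ X) ⊆ (A' \ bd G U A) ∪ ((U \ A) \ X) := by
          intro x
          simp only [hAdef, Set.mem_sdiff, Set.mem_union, Set.mem_insert_iff]
          tauto
        have hno : ∀ a ∈ A' \ bd G U A, ∀ b ∈ (U \ A) \ X, ¬ G.Adj a b := by
          rintro a ⟨ha, ha'⟩ b ⟨⟨hb, hb'⟩, -⟩ hab
          exact ha' ⟨Or.inr ha, b, hb, hb', hab⟩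
        rcases minor_side hno (hcon.mono hsub) with h | h
        · exact hA' d (lt_of_lt_of_le hd (hle d)) (h.mono Set.sdiff_subset)
        · exact hm h

theorem connected_image_val {G : SimpleGraph V} {S : Set V} (T : Set S) :
    ((G.induce S).induce T).Connected ↔ (G.induce (Subtype.val '' T)).Connected := by
  let e : ((G.induce S).induce T) ≃g (G.induce (Subtype.val '' T)) :=
    { toEquiv := Equiv.Set.image Subtype.val T Subtype.val_injective
      map_rel_iff' := by intro a b; rfl }
  exact e.connected_iff

theorem hasMinor_iff {G : SimpleGraph V} {F : SimpleGraph W} {S : Set V} :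
    HasMinor (G.induce S) F ↔ MinorOn G F Set.univ S := by
  constructor
  · rintro ⟨f, h1, h2, h3⟩
    refine ⟨fun w => Subtype.val '' f w, ?_, ?_, ?_, ?_⟩
    · rintro w - _ ⟨x, -, rfl⟩; exact x.2
    · intro w _; exact (connected_image_val _).1 (h1 w)
    · intro w _ w' _ hne
      exact (Set.disjoint_image_iff Subtype.val_injective).2 (h2 hne)
    · intro w _ w' _ h
      obtain ⟨a, ha, b, hb, hab⟩ := h3 h
      exact ⟨a, ⟨a, ha, rfl⟩, b, ⟨b, hb, rfl⟩, hab⟩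
  · rintro ⟨f, h0, h1, h2, h3⟩
    refine ⟨fun w => Subtype.val ⁻¹' f w, ?_, ?_, ?_⟩
    · intro w
      rw [connected_image_val, Subtype.image_preimage_coe,
        Set.inter_eq_self_of_subset_right (h0 w trivial)]
      exact h1 w trivial
    · intro w w' hne
      exact (h2 w trivial w' trivial hne).preimage _
    · intro w w' h
      obtain ⟨a, ha, b, hb, hab⟩ := h3 w trivial w' trivial h
      exact ⟨⟨a, h0 w trivial ha⟩, ha, ⟨b, h0 w' trivial hb⟩, hb, hab⟩

theorem packing_bound [Fintype V] [Fintype W] {G : SimpleGraph V} {F : SimpleGraph W}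
    {k : ℕ} {S : Fin k → Set V} (h : IsHPacking G F k S) :
    k * Fintype.card W ≤ Fintype.card V := by
  classical
  obtain ⟨h1, h2⟩ := h
  have h3 : ∀ a, MinorOn G F Set.univ (S a) := fun a => hasMinor_iff.1 (h2 a)
  choose f hf1 hf2 hf3 hf4 using h3
  have hne : ∀ a w, ∃ x, x ∈ f a w := fun a w => by
    obtain ⟨x⟩ := (hf2 a w trivial).nonempty
    exact ⟨x, x.2⟩
  choose x hx using hne
  have hinj : Function.Injective (fun p : Fin k × W => x p.1 p.2) := by
    rintro ⟨a, w⟩ ⟨b, w'⟩ e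
    simp only at e
    have hab : a = b := by
      by_contra hab
      exact Set.disjoint_left.1 (h1 hab) (hf1 a w trivial (hx a w))
        (e ▸ hf1 b w' trivial (hx b w'))
    subst hab
    have hww : w = w' := by
      by_contra hww
      exact Set.disjoint_left.1 (hf3 a w trivial w' trivial hww) (hx a w) (e ▸ hx a w')
    rw [hww]
  simpa using Fintype.card_le_of_injective _ hinj

theorem packing_bdd [Fintype V] [Fintype W] [Nonempty W] (G : SimpleGraph V) (F : SimpleGraph W) :
    BddAbove {k | ∃ S : Fin k → Set V, IsHPacking G F k S} := by
  refine ⟨Fintype.card V, ?_⟩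
  rintro k ⟨S, hS⟩
  have := packing_bound hS
  have hp : 0 < Fintype.card W := Fintype.card_pos
  nlinarith

theorem le_nuT [Fintype V] [Fintype W] [Nonempty W] {G : SimpleGraph V} {F : SimpleGraph W}
    {k : ℕ} {S : Fin k → Set V} (h : IsHPacking G F k S) : k ≤ nuT G F :=
  le_csSup (packing_bdd G F) ⟨S, h⟩

theorem tau_upper [Fintype V] [Fintype W] [Nonempty W] {G : SimpleGraph V} {F : SimpleGraph W}
    (hF : F.IsAcyclic) :
    tauT G F ≤ Fintype.card W * nuT G F +
      (Fintype.card W + 1) * (Fintype.card W * (nuT G F + 1)) := by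
  classical
  have : Fintype F.ConnectedComponent := Fintype.ofFinite _
  obtain ⟨k, S, X, -, h2, h3, h4, h5⟩ := stage_one (G := G) hF _ Set.univ rfl
  have hk : k ≤ nuT G F := le_nuT ⟨h2, fun a => hasMinor_iff.2 (h3 a)⟩
  have hcard : Fintype.card F.ConnectedComponent ≤ Fintype.card W :=
    Fintype.card_le_of_surjective F.connectedComponentMk
      (fun c => by obtain ⟨w, hw⟩ := c.exists_rep; exact ⟨w, hw⟩)
  rcases stage_two (F := F) _ (fun _ => nuT G F + 1) (Set.univ \ X) rfl h5 with
    ⟨T, hT1, hT2⟩ | ⟨c, Y, -, hY, hm⟩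
  · exfalso
    have hp : IsHPacking G F (nuT G F + 1) (fun a => ⋃ c, T c a) := by
      constructor
      · intro a b hab
        simp only [Set.disjoint_iUnion_left, Set.disjoint_iUnion_right]
        intro c d
        exact hT2 _ _ _ _ a.2 b.2 (Or.inr fun h => hab (Fin.ext h))
      · intro a
        rw [hasMinor_iff]
        have hh : ∀ c, MinorOn G F c.supp (T c a) := fun c => (hT1 c a a.2).2
        choose f hf1 hf2 hf3 hf4 using hh
        have hmem : ∀ w, w ∈ (F.connectedComponentMk w).supp := fun w => rfl
        refine ⟨fun w => f (F.connectedComponentMk w) w, ?_, ?_, ?_, ?_⟩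
        · intro w _
          exact (hf1 _ w (hmem w)).trans (Set.subset_iUnion (fun c => T c a) _)
        · intro w _; exact hf2 _ w (hmem w)
        · intro w _ w' _ hne
          by_cases e : F.connectedComponentMk w = F.connectedComponentMk w'
          · simp only [← e]
            exact hf3 _ w (hmem w) w' e.symm hne
          · exact (hT2 _ _ _ _ a.2 a.2 (Or.inl e)).mono (hf1 _ w (hmem w)) (hf1 _ w' (hmem w'))
        · intro w _ w' _ hadj
          have e : F.connectedComponentMk w = F.connectedComponentMk w' :=
            ConnectedComponent.sound hadj.reachable
          simp only [← e]
          exact hf4 _ w (hmem w) w' e.symm hadj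
    have := le_nuT hp
    omega
  · have h1 : tauT G F ≤ (X ∪ Y).ncard := by
      apply Nat.sInf_le
      refine ⟨X ∪ Y, rfl, ?_⟩
      rw [hasMinor_iff]
      rintro ⟨f, h1, h2, h3, h4⟩
      refine hm ⟨f, fun w _ => (h1 w trivial).trans ?_, fun w _ => h2 w trivial,
        fun w _ w' _ => h3 w trivial w' trivial, fun w _ w' _ => h4 w trivial w' trivial⟩
      intro x hx
      exact ⟨⟨trivial, fun h => hx (Or.inl h)⟩, fun h => hx (Or.inr h)⟩
    have h2 := Set.ncard_union_le X Y
    have h3 : Fintype.card W * k ≤ Fintype.card W * nuT G F := Nat.mul_le_mul_left _ hk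
    have h4' : ∑ _c : F.ConnectedComponent, (nuT G F + 1) ≤ Fintype.card W * (nuT G F + 1) := by
      simp only [Finset.sum_const, Finset.card_univ, smul_eq_mul]
      exact Nat.mul_le_mul_right _ hcard
    have h5' := Nat.mul_le_mul_left (Fintype.card W + 1) h4'
    omega

theorem top_minor [Fintype W] {F : SimpleGraph W} [Finite V] {S : Set V}
    (h : Fintype.card W ≤ S.ncard) : MinorOn (⊤ : SimpleGraph V) F Set.univ S := by
  classical
  have : Fintype S := Fintype.ofFinite _
  rw [← Nat.card_coe_set_eq, Nat.card_eq_fintype_card] at h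
  obtain ⟨g⟩ := Function.Embedding.nonempty_of_card_le h
  refine ⟨fun w => {(g w : V)}, ?_, ?_, ?_, ?_⟩
  · rintro w - _ rfl; exact (g w).2
  · intro w _; exact connected_singleton _ _
  · intro w _ w' _ hne
    rw [Set.disjoint_singleton]
    exact fun e => hne (g.injective (Subtype.ext e))
  · intro w _ w' _ hadj
    exact ⟨_, rfl, _, rfl, fun e => hadj.ne (g.injective (Subtype.ext e))⟩

theorem top_bounds [Fintype W] [Nonempty W] (F : SimpleGraph W) (k : ℕ) (hk : 0 < k) :
    0 < nuT (⊤ : SimpleGraph (Fin (Fintype.card W * k))) F ∧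
    nuT (⊤ : SimpleGraph (Fin (Fintype.card W * k))) F ≤ k ∧
    Fintype.card W * k + 1 ≤
      tauT (⊤ : SimpleGraph (Fin (Fintype.card W * k))) F + Fintype.card W := by
  have hp : 0 < Fintype.card W := Fintype.card_pos
  refine ⟨?_, ?_, ?_⟩
  · have : IsHPacking (⊤ : SimpleGraph (Fin (Fintype.card W * k))) F 1 (fun _ => Set.univ) := by
      refine ⟨fun a b h => absurd (Subsingleton.elim a b) h, fun a => ?_⟩
      rw [hasMinor_iff]
      apply top_minor
      rw [Set.ncard_univ, Nat.card_eq_fintype_card, Fintype.card_fin]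
      exact Nat.le_mul_of_pos_right _ hk
    exact le_nuT this
  · apply csSup_le'
    rintro j ⟨S, hS⟩
    have := packing_bound hS
    rw [Fintype.card_fin, mul_comm] at this
    exact Nat.le_of_mul_le_mul_left this hp
  · have hne : {n | ∃ X : Set (Fin (Fintype.card W * k)), X.ncard = n ∧
        ¬ HasMinor ((⊤ : SimpleGraph (Fin (Fintype.card W * k))).induce Xᶜ) F}.Nonempty := by
      refine ⟨_, Set.univ, rfl, ?_⟩
      rw [hasMinor_iff]
      rintro ⟨f, h1, h2, -⟩
      obtain ⟨w⟩ := ‹Nonempty W›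
      obtain ⟨x⟩ := (h2 w trivial).nonempty
      exact h1 w trivial x.2 trivial
    obtain ⟨X, hX, hm⟩ := Nat.sInf_mem hne
    change X.ncard = tauT _ F at hX
    rw [hasMinor_iff] at hm
    have hlt : Xᶜ.ncard < Fintype.card W := by
      by_contra hcon
      exact hm (top_minor (not_lt.1 hcon))
    have := Set.ncard_add_ncard_compl X
    rw [Nat.card_eq_fintype_card, Fintype.card_fin] at this
    omega

end Aux

/-- For every (nonempty) forest `F`, the supremum `ρ(F)` of `τ_F(G)/ν_F(G)` over all graphs
`G` with `ν_F(G) > 0` is at least `|V(F)|`. -/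
theorem rho_ge_card {W : Type} [Fintype W] [Nonempty W] (F : SimpleGraph W)
    (hF : F.IsAcyclic) :
    (Fintype.card W : ℝ) ≤
      sSup {ρ : ℝ | ∃ (V : Type) (_ : Fintype V) (G : SimpleGraph V),
        0 < nuT G F ∧ ρ = (tauT G F : ℝ) / (nuT G F : ℝ)} := by
  have hp : 0 < Fintype.card W := Fintype.card_pos
  set t := Fintype.card W with ht
  have hbdd : BddAbove {ρ : ℝ | ∃ (V : Type) (_ : Fintype V) (G : SimpleGraph V),
        0 < nuT G F ∧ ρ = (tauT G F : ℝ) / (nuT G F : ℝ)} := by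
    refine ⟨(t + (t + 1) * (t * 2) : ℝ), ?_⟩
    rintro ρ ⟨V, _, G, hpos, rfl⟩
    have h1 := tau_upper (G := G) hF
    rw [← ht] at h1
    have hpos' : (1 : ℝ) ≤ nuT G F := by exact_mod_cast hpos
    rw [div_le_iff₀ (by linarith)]
    have h2 : (tauT G F : ℝ) ≤ t * nuT G F + (t + 1) * (t * (nuT G F + 1)) := by exact_mod_cast h1
    have h3 : ((t : ℝ) + 1) * (t * (nuT G F + 1)) ≤ (t + 1) * (t * (2 * nuT G F)) := by
      gcongr; linarith
    linarith
  have key : ∀ k : ℕ, 0 < k → (t : ℝ) - t / k ≤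
      sSup {ρ : ℝ | ∃ (V : Type) (_ : Fintype V) (G : SimpleGraph V),
        0 < nuT G F ∧ ρ = (tauT G F : ℝ) / (nuT G F : ℝ)} := by
    intro k hk
    obtain ⟨h1, h2, h3⟩ := top_bounds F k hk
    rw [← ht] at h1 h2 h3
    refine le_trans ?_ (le_csSup hbdd ⟨Fin (t * k), inferInstance, ⊤, h1, rfl⟩)
    have hk' : (0 : ℝ) < k := by exact_mod_cast hk
    have h1' : (0 : ℝ) < nuT (⊤ : SimpleGraph (Fin (t * k))) F := by exact_mod_cast h1
    have h2' : (nuT (⊤ : SimpleGraph (Fin (t * k))) F : ℝ) ≤ k := by exact_mod_cast h2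
    have h3' : (t : ℝ) * k + 1 ≤ tauT (⊤ : SimpleGraph (Fin (t * k))) F + t := by exact_mod_cast h3
    calc (t : ℝ) - t / k = (t * k - t) / k := by field_simp
      _ ≤ (tauT (⊤ : SimpleGraph (Fin (t * k))) F : ℝ) / k := by
        apply div_le_div_of_nonneg_right _ hk'.le
        linarith
      _ ≤ _ := div_le_div_of_nonneg_left (by positivity) h1' h2'
  have hlim : Filter.Tendsto (fun k : ℕ => (t : ℝ) - t / k) Filter.atTop (nhds ((t : ℝ) - 0)) :=
    tendsto_const_nhds.sub (tendsto_const_div_atTop_nhds_zero_nat _)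
  rw [sub_zero] at hlim
  refine le_of_tendsto hlim ?_
  filter_upwards [Filter.eventually_gt_atTop 0] with k hk
  exact key k hk
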